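/- arXiv:2401.03866 — 4 statements merged into one kernel-verified Lean document; each statement's English description precedes it below -/
import Mathlib

section
/- Every letter appears in the democratic sequence with exactly its assigned frequency: for every letter a ∈ ℕ, the limit as N → ∞ of (1/N)·#{n : 1 ≤ n ≤ N, u(n) = a} exists and equals λ(a). -/
open Filter Finset Topology

/-- The `M`-frequency of the letter `a` in the sequence `u` (indexed from 1):
`λ_M(a) = #{n : 1 ≤ n ≤ M, u n = a} / M`. -/
noncomputable def demoFreq (u : ℕ → ℕ) (M a : ℕ) : ℝ :=
  (((Finset.Icc 1 M).filter fun n => u n = a).card : ℝ) / M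

/-- The `M`-deficit of the letter `a`: `D_M(a) = λ(a) - λ_M(a)`. -/
noncomputable def demoDeficit (lam : ℕ → ℝ) (u : ℕ → ℕ) (M a : ℕ) : ℝ :=
  lam a - demoFreq u M a

/-- `u` is the democratic sequence for the frequencies `lam`: `u 1 = 0`, and for each `M ≥ 1`,
either the maximal deficit at step `M` is positive and `u (M+1)` is the least letter attaining
the maximum of the deficits, or all deficits are nonpositive and `u (M+1) = 0`. -/
def IsDemocratic (lam : ℕ → ℝ) (u : ℕ → ℕ) : Prop :=
  u 1 = 0 ∧
    ∀ M : ℕ, 1 ≤ M →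
      ((0 < demoDeficit lam u M (u (M + 1)) ∧
          IsLeast {a : ℕ | ∀ b : ℕ, demoDeficit lam u M b ≤ demoDeficit lam u M a}
            (u (M + 1))) ∨
        ((∀ a : ℕ, demoDeficit lam u M a ≤ 0) ∧ u (M + 1) = 0))

/-!
Multiply the deficits at step `N` by `N` and view them as a vector `S N` of `ℓ²`. The next letter
`c` adds the vector `lam - e_c` to it. Since `lam` is a probability vector, `⟪S N, lam⟫` is an
average of the coordinates of `S N`, hence at most the maximal one, `S N c = ⟪S N, e_c⟫`. So each
step makes an angle of at least `π / 2` with the sum of the previous ones, and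
`‖S (N + 1)‖ ^ 2 ≤ ‖S N‖ ^ 2 + ‖lam - e_c‖ ^ 2 ≤ ‖S N‖ ^ 2 + 2`. Therefore `‖S N‖ ^ 2 ≤ 2 * N`, and
every deficit at step `N` is at most `√(2 / N)` in absolute value.
-/

open scoped lp InnerProductSpace

lemma norm_sum_range_sq_le_of_re_inner_nonpos {𝕜 E : Type*} [RCLike 𝕜] [SeminormedAddCommGroup E]
    [InnerProductSpace 𝕜 E] {x : ℕ → E}
    (hx : ∀ n, RCLike.re ⟪∑ i ∈ range n, x i, x n⟫_𝕜 ≤ 0) (n : ℕ) :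
    ‖∑ i ∈ range n, x i‖ ^ 2 ≤ ∑ i ∈ range n, ‖x i‖ ^ 2 := by
  induction n with
  | zero => simp
  | succ n ih =>
    rw [sum_range_succ, sum_range_succ, norm_add_sq (𝕜 := 𝕜)]
    linarith [hx n]

lemma memℓp_of_summable_norm {ι : Type*} {E : ι → Type*} [∀ i, NormedAddCommGroup (E i)]
    {f : ∀ i, E i} (hf : Summable fun i => ‖f i‖) {q : ENNReal} (hq : 1 ≤ q) : Memℓp f q :=
  (memℓp_gen (p := 1) (by simpa using hf)).of_exponent_ge hq

section ProbabilityVector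

variable {ι : Type*} {p v : ℓ²(ι, ℝ)}

lemma inner_le_of_hasSum_one (hp : ∀ a, 0 ≤ p a) (hsum : HasSum p 1) {m : ℝ}
    (hv : ∀ a, v a ≤ m) : ⟪v, p⟫_ℝ ≤ m := by
  have hmul : HasSum (fun a => p a * m) m := by simpa using hsum.mul_right m
  exact hasSum_le (fun a => mul_le_mul_of_nonneg_left (hv a) (hp a)) (lp.hasSum_inner v p) hmul

lemma norm_sq_le_one_of_hasSum_one (hp : ∀ a, 0 ≤ p a) (hsum : HasSum p 1) : ‖p‖ ^ 2 ≤ 1 := by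
  rw [← real_inner_self_eq_norm_sq]
  exact inner_le_of_hasSum_one hp hsum fun a => le_hasSum hsum a fun b _ => hp b

variable [DecidableEq ι]

lemma norm_sub_single_sq_le_two (hp : ∀ a, 0 ≤ p a) (hsum : HasSum p 1) (c : ι) :
    ‖p - lp.single 2 c 1‖ ^ 2 ≤ 2 := by
  have hinner : ⟪p, lp.single 2 c (1 : ℝ)⟫_ℝ = p c := by simp [lp.inner_single_right]
  have hnorm : ‖lp.single (E := fun _ : ι => ℝ) 2 c 1‖ = 1 := by simp [lp.norm_single]
  rw [norm_sub_sq_real, hinner, hnorm]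
  linarith [norm_sq_le_one_of_hasSum_one hp hsum, hp c]

lemma inner_sub_single_nonpos (hp : ∀ a, 0 ≤ p a) (hsum : HasSum p 1) {c : ι}
    (hv : ∀ a, v a ≤ v c) : ⟪v, p - lp.single 2 c 1⟫_ℝ ≤ 0 := by
  have hinner : ⟪v, lp.single 2 c (1 : ℝ)⟫_ℝ = v c := by simp [lp.inner_single_right]
  rw [inner_sub_right, hinner, sub_nonpos]
  exact inner_le_of_hasSum_one hp hsum hv

end ProbabilityVector

section Greedy

variable {ι : Type*} [DecidableEq ι] {w : ι → ℝ} {u : ℕ → ι}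

/-- The deficit of the letter `a` at step `N`, multiplied by `N`: the gap between the expected
number `N * w a` of occurrences of `a` among `u 1, …, u N` and the actual number. Clearing the
denominator makes it additive in `N`, with value `0` at `N = 0`. -/
def scaledDeficit (w : ι → ℝ) (u : ℕ → ι) (N : ℕ) (a : ι) : ℝ :=
  N * w a - #{n ∈ Icc 1 N | u n = a}

/-- `u` is greedy for the frequencies `w`: each letter `u (N + 1)` has the largest deficit at
step `N`, ties being broken arbitrarily. Since scaled deficits vanish at `N = 0`, there is no
constraint on `u 1`, nor on the unused value `u 0`. -/
def IsGreedy (w : ι → ℝ) (u : ℕ → ι) : Prop :=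
  ∀ N a, scaledDeficit w u N a ≤ scaledDeficit w u N (u (N + 1))

lemma scaledDeficit_eq_sum (w : ι → ℝ) (u : ℕ → ι) (N : ℕ) (a : ι) :
    scaledDeficit w u N a = ∑ n ∈ range N, (w a - if a = u (n + 1) then 1 else 0) := by
  have hcard : (#{n ∈ Icc 1 N | u n = a} : ℝ) = ∑ n ∈ range N, if a = u (n + 1) then 1 else 0 := by
    rw [natCast_card_filter, range_eq_Ico, sum_Ico_add' (fun n => if a = u n then (1 : ℝ) else 0)]
    simp only [eq_comm, zero_add, Ico_add_one_right_eq_Icc]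
  simp [scaledDeficit, hcard]

lemma hasSum_scaledDeficit (hsum : HasSum w 1) (u : ℕ → ι) (N : ℕ) :
    HasSum (scaledDeficit w u N) 0 := by
  have hstep (n : ℕ) : HasSum (fun a => w a - if a = u (n + 1) then 1 else 0) 0 := by
    simpa using hsum.sub (hasSum_ite_eq (u (n + 1)) (1 : ℝ))
  simpa only [← scaledDeficit_eq_sum, sum_const_zero] using
    hasSum_sum fun n (_ : n ∈ range N) => hstep n

lemma IsGreedy.scaledDeficit_sq_le (hu : IsGreedy w u) (hw : ∀ a, 0 ≤ w a) (hsum : HasSum w 1)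
    (N : ℕ) (a : ι) : scaledDeficit w u N a ^ 2 ≤ 2 * N := by
  let p : ℓ²(ι, ℝ) := ⟨w, memℓp_of_summable_norm hsum.summable.norm one_le_two⟩
  let x (n : ℕ) : ℓ²(ι, ℝ) := p - lp.single 2 (u (n + 1)) 1
  have hcoord (n : ℕ) (b : ι) : (∑ i ∈ range n, x i : ℓ²(ι, ℝ)) b = scaledDeficit w u n b := by
    simp only [scaledDeficit_eq_sum, x, p, lp.coeFn_sum, lp.coeFn_sub, lp.single_apply,
      Finset.sum_apply, Pi.sub_apply, Pi.single_apply]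
  have horth (n : ℕ) : ⟪∑ i ∈ range n, x i, x n⟫_ℝ ≤ 0 :=
    inner_sub_single_nonpos hw hsum fun b => by simpa only [hcoord] using hu n b
  calc scaledDeficit w u N a ^ 2
      ≤ ‖∑ i ∈ range N, x i‖ ^ 2 := by
        rw [← hcoord, sq_le_sq, abs_norm, ← Real.norm_eq_abs]
        exact lp.norm_apply_le_norm two_ne_zero _ a
    _ ≤ ∑ i ∈ range N, ‖x i‖ ^ 2 := norm_sum_range_sq_le_of_re_inner_nonpos (𝕜 := ℝ) horth N
    _ ≤ ∑ _i ∈ range N, 2 := sum_le_sum fun n _ => norm_sub_single_sq_le_two hw hsum _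
    _ = 2 * N := by simp [mul_comm]

lemma IsGreedy.abs_sub_frequency_le (hu : IsGreedy w u) (hw : ∀ a, 0 ≤ w a) (hsum : HasSum w 1)
    {N : ℕ} (hN : 0 < N) (a : ι) :
    |w a - (#{n ∈ Icc 1 N | u n = a} : ℝ) / N| ≤ √(2 / N) := by
  have hdiv : w a - (#{n ∈ Icc 1 N | u n = a} : ℝ) / N = scaledDeficit w u N a / N := by
    unfold scaledDeficit
    field_simp
  apply Real.abs_le_sqrt
  calc (w a - (#{n ∈ Icc 1 N | u n = a} : ℝ) / N) ^ 2
      = scaledDeficit w u N a ^ 2 / (N : ℝ) ^ 2 := by rw [hdiv, div_pow]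
    _ ≤ 2 * N / (N : ℝ) ^ 2 := by gcongr; exact hu.scaledDeficit_sq_le hw hsum N a
    _ = 2 / N := by field_simp

end Greedy

lemma scaledDeficit_eq_mul_demoDeficit (lam : ℕ → ℝ) (u : ℕ → ℕ) (N a : ℕ) :
    scaledDeficit lam u N a = N * demoDeficit lam u N a := by
  obtain rfl | hN := N.eq_zero_or_pos
  · simp [scaledDeficit]
  · unfold scaledDeficit demoDeficit demoFreq
    field_simp

lemma IsDemocratic.isGreedy {lam : ℕ → ℝ} {u : ℕ → ℕ} (hu : IsDemocratic lam u)
    (hsum : HasSum lam 1) : IsGreedy lam u := by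
  intro N a
  obtain rfl | hN := N.eq_zero_or_pos
  · simp [scaledDeficit]
  obtain ⟨-, hmax, -⟩ | ⟨hnonpos, -⟩ := hu.2 N hN
  · simp only [scaledDeficit_eq_mul_demoDeficit]
    exact mul_le_mul_of_nonneg_left (hmax a) N.cast_nonneg
  · -- The deficits have sum zero, so if none is positive, they all vanish.
    have hle : scaledDeficit lam u N ≤ 0 := fun b => by
      rw [scaledDeficit_eq_mul_demoDeficit]
      exact mul_nonpos_of_nonneg_of_nonpos N.cast_nonneg (hnonpos b)
    have hzero : scaledDeficit lam u N = 0 := by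
      have hneg := (hasSum_scaledDeficit hsum u N).neg
      rw [neg_zero, hasSum_zero_iff_of_nonneg fun b => neg_nonneg.2 (hle b)] at hneg
      exact neg_eq_zero.1 hneg
    simp [hzero]

theorem democratic_frequency_general {ι : Type*} [DecidableEq ι] {w : ι → ℝ} {u : ℕ → ι}
    (hw : ∀ a, 0 ≤ w a) (hsum : HasSum w 1) (hu : IsGreedy w u) :
    TendstoUniformly (fun (N : ℕ) a => (#{n ∈ Icc 1 N | u n = a} : ℝ) / N) w atTop := by
  have hlim : Tendsto (fun N : ℕ => √(2 / (N : ℝ))) atTop (𝓝 0) := by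
    simpa using (tendsto_const_div_atTop_nhds_zero_nat (2 : ℝ)).sqrt
  rw [Metric.tendstoUniformly_iff]
  intro ε hε
  filter_upwards [hlim.eventually_lt_const hε, eventually_gt_atTop 0] with N hlt hN a
  exact (hu.abs_sub_frequency_le hw hsum hN a).trans_lt hlt

/-- Every letter appears in the democratic sequence with exactly its assigned frequency. -/
theorem democratic_frequency (lam : ℕ → ℝ) (u : ℕ → ℕ)
    (hpos : ∀ a : ℕ, 0 < lam a) (hsum : HasSum lam 1) (hmono : Antitone lam)
    (hdem : IsDemocratic lam u) :
    ∀ a : ℕ, Tendsto (fun N : ℕ => demoFreq u N a) atTop (𝓝 (lam a)) :=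
  (democratic_frequency_general (fun a => (hpos a).le) hsum (hdem.isGreedy hsum)).tendsto_at
end

section
/- For every letter b ∈ ℕ, the upper frequency of b in the democratic sequence is at most its assigned frequency: limsup_{N→∞} (1/N)·#{n : 1 ≤ n ≤ N, u(n) = b} ≤ λ(b). -/
open Filter Finset Topology

/-!
The greedy rule only ever selects a letter `b` with `λ_M(b) ≤ λ(b)`: either its deficit is positive,
or every deficit is nonpositive. In the latter case `λ ≤ λ_M` is finitely supported, and since it
has at least the total mass of the probability vector `λ_M`, the two coincide. A selection adds a
single occurrence, so `M · λ_M(b) ≤ M · λ(b) + 1` for all `M`; divide by `M` and let `M → ∞`.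
-/

lemma demoFreq_nonneg (u : ℕ → ℕ) (M a : ℕ) : 0 ≤ demoFreq u M a := by
  unfold demoFreq
  positivity

lemma mul_demoFreq (u : ℕ → ℕ) (M a : ℕ) :
    M * demoFreq u M a = #{n ∈ Icc 1 M | u n = a} :=
  mul_div_cancel_of_imp' fun hM => by simp [Nat.cast_eq_zero.mp hM]

lemma succ_mul_demoFreq_succ (u : ℕ → ℕ) (M a : ℕ) :
    (M + 1 : ℕ) * demoFreq u (M + 1) a = M * demoFreq u M a + if u (M + 1) = a then 1 else 0 := by
  simp only [mul_demoFreq, card_filter, sum_Icc_succ_top (Nat.le_add_left 1 M)]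
  push_cast
  rfl

lemma sum_demoFreq_le_one (u : ℕ → ℕ) (M : ℕ) (s : Finset ℕ) :
    ∑ a ∈ s, demoFreq u M a ≤ 1 := by
  have card_le : ∑ a ∈ s, #{n ∈ Icc 1 M | u n = a} ≤ M :=
    calc ∑ a ∈ s, #{n ∈ Icc 1 M | u n = a}
        = #{n ∈ Icc 1 M | u n ∈ s} := sum_card_fiberwise_eq_card_filter _ _ _
      _ ≤ #(Icc 1 M) := card_filter_le _ _
      _ = M := by simp
  unfold demoFreq
  rw [← sum_div]
  exact div_le_one_of_le₀ (mod_cast card_le) M.cast_nonneg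

lemma finite_support_demoFreq (u : ℕ → ℕ) (M : ℕ) : (Function.support (demoFreq u M)).Finite := by
  refine ((Icc 1 M).image u).finite_toSet.subset fun a ha => ?_
  contrapose! ha
  have not_taken : ∀ n ∈ Icc 1 M, u n ≠ a := by simpa using ha
  simp [demoFreq, filter_eq_empty_iff.mpr not_taken]

lemma eq_demoFreq_of_le {lam : ℕ → ℝ} {u : ℕ → ℕ} {M : ℕ} (hnonneg : ∀ a, 0 ≤ lam a)
    (hmass : lam.support.Finite → 1 ≤ ∑ᶠ a, lam a) (hle : ∀ a, lam a ≤ demoFreq u M a) :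
    lam = demoFreq u M := by
  have hfin := finite_support_demoFreq u M
  have hsub : lam.support ⊆ hfin.toFinset := fun a ha => by
    simpa using (((hnonneg a).lt_of_ne' ha).trans_le (hle a)).ne'
  have sum_ge : ∑ a ∈ hfin.toFinset, demoFreq u M a ≤ ∑ a ∈ hfin.toFinset, lam a :=
    calc ∑ a ∈ hfin.toFinset, demoFreq u M a
        ≤ 1 := sum_demoFreq_le_one u M _
      _ ≤ ∑ᶠ a, lam a := hmass (hfin.toFinset.finite_toSet.subset hsub)
      _ = ∑ a ∈ hfin.toFinset, lam a := finsum_eq_sum_of_support_subset lam hsub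
  have eq_on := (sum_eq_sum_iff_of_le fun a _ => hle a).mp
    ((sum_le_sum fun a _ => hle a).antisymm sum_ge)
  funext a
  by_cases ha : a ∈ hfin.toFinset
  · exact eq_on a ha
  · have hfreq : demoFreq u M a = 0 := by simpa using ha
    exact (hle a).antisymm (hfreq.trans_le (hnonneg a))

lemma IsDemocratic.demoFreq_le {lam : ℕ → ℝ} {u : ℕ → ℕ} (hdem : IsDemocratic lam u)
    (hnonneg : ∀ a, 0 ≤ lam a) (hmass : lam.support.Finite → 1 ≤ ∑ᶠ a, lam a)
    {M : ℕ} (hM : 1 ≤ M) : demoFreq u M (u (M + 1)) ≤ lam (u (M + 1)) := by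
  rcases hdem.2 M hM with ⟨late, -⟩ | ⟨none_late, -⟩
  · exact (sub_pos.mp late).le
  · exact (congrFun (eq_demoFreq_of_le hnonneg hmass fun a => sub_nonpos.mp (none_late a)) _).ge

section Bound

variable {u : ℕ → ℕ} {b : ℕ} {c : ℝ}

lemma mul_demoFreq_le_mul_add_one (hc : 0 ≤ c)
    (hu : ∀ M, 1 ≤ M → u (M + 1) = b → demoFreq u M b ≤ c) (N : ℕ) :
    N * demoFreq u N b ≤ N * c + 1 := by
  induction N with
  | zero => simp
  | succ M ih =>
    rw [succ_mul_demoFreq_succ]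
    push_cast
    split_ifs with hb
    · have before : M * demoFreq u M b ≤ M * c := by
        rcases M.eq_zero_or_pos with rfl | hM
        · simp
        · exact mul_le_mul_of_nonneg_left (hu M hM hb) M.cast_nonneg
      linarith
    · linarith

lemma limsup_demoFreq_le (hc : 0 ≤ c)
    (hu : ∀ M, 1 ≤ M → u (M + 1) = b → demoFreq u M b ≤ c) :
    limsup (fun N => demoFreq u N b) atTop ≤ c := by
  have bound_tendsto : Tendsto (fun N : ℕ => c + 1 / (N : ℝ)) atTop (𝓝 c) := by
    simpa using tendsto_const_nhds.add (tendsto_one_div_atTop_nhds_zero_nat (𝕜 := ℝ))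
  have le_bound : ∀ᶠ N : ℕ in atTop, demoFreq u N b ≤ c + 1 / (N : ℝ) := by
    filter_upwards [eventually_gt_atTop 0] with N hN
    have hN' : (0 : ℝ) < N := Nat.cast_pos.mpr hN
    refine le_of_mul_le_mul_left ?_ hN'
    rw [mul_add, mul_one_div_cancel hN'.ne']
    exact mul_demoFreq_le_mul_add_one hc hu N
  rw [← bound_tendsto.limsup_eq]
  exact limsup_le_limsup le_bound
    (isCoboundedUnder_le_of_le atTop fun N => demoFreq_nonneg u N b)
    bound_tendsto.isBoundedUnder_le

end Bound

theorem democratic_limsup_le_general (lam : ℕ → ℝ) (u : ℕ → ℕ) (hnonneg : ∀ a, 0 ≤ lam a)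
    (hmass : lam.support.Finite → 1 ≤ ∑ᶠ a, lam a) (hdem : IsDemocratic lam u) (b : ℕ) :
    limsup (fun N => demoFreq u N b) atTop ≤ lam b :=
  limsup_demoFreq_le (hnonneg b) fun _ hM hb => hb ▸ hdem.demoFreq_le hnonneg hmass hM

/-- The upper frequency of every letter is at most its assigned frequency. -/
theorem democratic_limsup_le (lam : ℕ → ℝ) (u : ℕ → ℕ)
    (hpos : ∀ a : ℕ, 0 < lam a) (hsum : HasSum lam 1) (hmono : Antitone lam)
    (hdem : IsDemocratic lam u) :
    ∀ b : ℕ, Filter.limsup (fun N : ℕ => demoFreq u N b) atTop ≤ lam b :=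
  democratic_limsup_le_general lam u (fun a => (hpos a).le)
    (fun hfin => (hsum.tsum_eq.symm.trans (tsum_eq_finsum hfin)).le) hdem
end

section
/- Let 0 < c < 1 and let (a_m)_{m≥1} be any sequence of real numbers. Then there exists a real number β > 1 such that for every m ≥ 1 the power β^m lies, modulo 1, in the closed interval [a_m, a_m + c]: for every m ≥ 1 there exists an integer q_m with a_m ≤ β^m − q_m ≤ a_m + c. -/
/-!
If `f₀, f₁, …` are continuous and monotone and `fₙ₊₁` grows by at least `c + 1` on every interval on
which `fₙ` grows by `c`, then nested intervals `Iₙ` can be chosen so that `fₙ` maps the endpoints of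
`Iₙ` to those of a translate `[aₙ + q, aₙ + q + c]` with `q` an integer: any interval of length
`c + 1` contains such a translate. A common point of the `Iₙ` has all its values `fₙ` in the
prescribed arcs. For the powers `fₙ(x) = xⁿ⁺¹`, the inequality
`x (yⁿ - xⁿ) ≤ yⁿ⁺¹ - xⁿ⁺¹` gives this growth as soon as `x ≥ 1 + c⁻¹`.
-/

open Set

theorem exists_forall_mem_of_nested_intervals {α : Type*} [ConditionallyCompleteLattice α]
    {P : ℕ → NonemptyInterval α → Prop} (hzero : ∃ I, P 0 I)
    (hsucc : ∀ n I, P n I → ∃ J ≤ I, P (n + 1) J) :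
    ∃ x, ∀ n, ∃ I, P n I ∧ x ∈ I := by
  obtain ⟨I₀, hI₀⟩ := hzero
  choose next next_le hnext using hsucc
  let I : ∀ n, {I // P n I} :=
    Nat.rec ⟨I₀, hI₀⟩ fun n I ↦ ⟨next n I I.2, hnext n I I.2⟩
  have hI : Antitone fun n ↦ (I n).1 := antitone_nat_of_succ_le fun n ↦ next_le n _ (I n).2
  have hmem := Monotone.ciSup_mem_iInter_Icc_of_antitone
    (fun _ _ h ↦ (hI h).1) (fun _ _ h ↦ (hI h).2) (fun n ↦ (I n).1.fst_le_snd)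
  exact ⟨_, fun n ↦ ⟨_, (I n).2, mem_iInter.1 hmem n⟩⟩

/-- The map `g` sends the endpoints of `I` to those of a lift `[a + q, a + q + c]` to the real line
of the arc `[a, a + c]` of the torus. Only the endpoints are constrained; for monotone `g` this puts
all of `g(I)` in the lift. -/
def SpansArc (g : ℝ → ℝ) (a c : ℝ) (I : NonemptyInterval ℝ) : Prop :=
  ∃ q : ℤ, g I.fst = a + q ∧ g I.snd = a + q + c

section Arcs

variable {g : ℝ → ℝ} {a c : ℝ} {I : NonemptyInterval ℝ}

theorem SpansArc.exists_int_of_mem (h : SpansArc g a c I) (hg : MonotoneOn g (I : Set ℝ))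
    {x : ℝ} (hx : x ∈ I) : ∃ q : ℤ, a ≤ g x - q ∧ g x - q ≤ a + c := by
  obtain ⟨q, hfst, hsnd⟩ := h
  have hlower : g I.fst ≤ g x := hg (left_mem_Icc.2 I.fst_le_snd) hx hx.1
  have hupper : g x ≤ g I.snd := hg hx (right_mem_Icc.2 I.fst_le_snd) hx.2
  exact ⟨q, by linarith, by linarith⟩

theorem exists_le_spansArc (a : ℝ) (hc : 0 ≤ c) (hg : ContinuousOn g (I : Set ℝ))
    (hgrowth : g I.fst + (c + 1) ≤ g I.snd) : ∃ J ≤ I, SpansArc g a c J := by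
  let q := ⌈g I.fst - a⌉
  have hq : g I.fst ≤ a + q := by linarith [Int.le_ceil (g I.fst - a)]
  have hq' : a + q + c ≤ g I.snd := by linarith [Int.ceil_lt_add_one (g I.fst - a)]
  obtain ⟨l, hl, hgl⟩ : a + q ∈ g '' Icc I.fst I.snd :=
    intermediate_value_Icc I.fst_le_snd hg ⟨hq, by linarith⟩
  obtain ⟨r, hr, hgr⟩ : a + q + c ∈ g '' Icc l I.snd :=
    intermediate_value_Icc hl.2 (hg.mono (Icc_subset_Icc_left hl.1)) ⟨by linarith, hq'⟩
  exact ⟨⟨(l, r), hr.1⟩, ⟨hl.1, hr.2⟩, q, hgl, hgr⟩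

theorem exists_mem_forall_modOne_mem_arc {f : ℕ → ℝ → ℝ} (a : ℕ → ℝ) (hc : 0 ≤ c)
    (hcont : ∀ n, ContinuousOn (f n) (I : Set ℝ)) (hmono : ∀ n, MonotoneOn (f n) (I : Set ℝ))
    (hzero : f 0 I.fst + (c + 1) ≤ f 0 I.snd)
    (hsucc : ∀ n, ∀ J ≤ I, f n J.snd = f n J.fst + c →
      f (n + 1) J.fst + (c + 1) ≤ f (n + 1) J.snd) :
    ∃ x ∈ I, ∀ n, ∃ q : ℤ, a n ≤ f n x - q ∧ f n x - q ≤ a n + c := by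
  have hrefine (n : ℕ) (J : NonemptyInterval ℝ) (hJ : J ≤ I ∧ SpansArc (f n) (a n) c J) :
      ∃ K ≤ J, K ≤ I ∧ SpansArc (f (n + 1)) (a (n + 1)) c K := by
    obtain ⟨hJI, q, hfst, hsnd⟩ := hJ
    obtain ⟨K, hKJ, hK⟩ := exists_le_spansArc (a (n + 1)) hc
      ((hcont (n + 1)).mono (NonemptyInterval.coe_subset_coe.2 hJI))
      (hsucc n J hJI (by rw [hfst, hsnd]))
    exact ⟨K, hKJ, hKJ.trans hJI, hK⟩
  obtain ⟨x, hx⟩ := exists_forall_mem_of_nested_intervals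
    (exists_le_spansArc (a 0) hc (hcont 0) hzero) hrefine
  refine ⟨x, ?_, fun n ↦ ?_⟩
  · obtain ⟨J, ⟨hJI, -⟩, hxJ⟩ := hx 0
    exact NonemptyInterval.coe_subset_coe.2 hJI hxJ
  · obtain ⟨J, ⟨hJI, hJ⟩, hxJ⟩ := hx n
    exact hJ.exists_int_of_mem ((hmono n).mono (NonemptyInterval.coe_subset_coe.2 hJI)) hxJ

end Arcs

theorem mul_pow_sub_pow_le_pow_succ_sub_pow_succ {R : Type*} [CommRing R] [PartialOrder R]
    [IsOrderedRing R] {x y : R} (hx : 0 ≤ x) (hxy : x ≤ y) (n : ℕ) :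
    x * (y ^ n - x ^ n) ≤ y ^ (n + 1) - x ^ (n + 1) :=
  calc x * (y ^ n - x ^ n) = x * y ^ n - x ^ (n + 1) := by ring
    _ ≤ y * y ^ n - x ^ (n + 1) := by
      have hy : 0 ≤ y ^ n := pow_nonneg (hx.trans hxy) n
      gcongr
    _ = y ^ (n + 1) - x ^ (n + 1) := by ring

theorem pow_succ_add_le_of_pow_eq_add {K : Type*} [Field K] [LinearOrder K]
    [IsStrictOrderedRing K] {c x y : K} (hc : 0 < c) (hx : 1 + c⁻¹ ≤ x) (hxy : x ≤ y) {n : ℕ}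
    (h : y ^ n = x ^ n + c) : x ^ (n + 1) + (c + 1) ≤ y ^ (n + 1) := by
  have hx₀ : 0 ≤ x := le_trans (by positivity) hx
  rw [← le_sub_iff_add_le']
  calc c + 1 = (1 + c⁻¹) * c := by field_simp
    _ ≤ x * c := by gcongr
    _ = x * (y ^ n - x ^ n) := by rw [h, add_sub_cancel_left]
    _ ≤ y ^ (n + 1) - x ^ (n + 1) := mul_pow_sub_pow_le_pow_succ_sub_pow_succ hx₀ hxy n

theorem exists_beta_powers_in_intervals_general {c : ℝ} (hc : 0 < c) (B : ℝ) (a : ℕ → ℝ) :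
    ∃ β : ℝ, B < β ∧ ∀ m : ℕ, 1 ≤ m →
      ∃ q : ℤ, a m ≤ β ^ m - q ∧ β ^ m - q ≤ a m + c := by
  let u := max (B + 1) (1 + c⁻¹)
  have hu : 1 + c⁻¹ ≤ u := le_max_right _ _
  have hu₀ : 0 ≤ u := le_trans (by positivity) hu
  let I : NonemptyInterval ℝ := ⟨(u, u + (c + 1)), by linarith⟩
  obtain ⟨β, hβ, hpow⟩ := exists_mem_forall_modOne_mem_arc (I := I)
    (f := fun n x ↦ x ^ (n + 1)) (fun n ↦ a (n + 1)) hc.le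
    (fun n ↦ (continuous_pow (n + 1)).continuousOn)
    (fun n x hx y _ hxy ↦ pow_le_pow_left₀ (hu₀.trans hx.1) hxy (n + 1))
    (by simp [I])
    (fun n J hJ ↦ pow_succ_add_le_of_pow_eq_add hc (hu.trans hJ.1) J.fst_le_snd)
  refine ⟨β, (lt_add_one B).trans_le ((le_max_left _ _).trans hβ.1), fun m hm ↦ ?_⟩
  obtain ⟨n, rfl⟩ := Nat.exists_eq_add_of_le' hm
  exact hpow n

/-- Given `0 < c < 1` and any sequence of real numbers `(a m)`, there is a real `β > 1`
such that for every `m ≥ 1` the power `β ^ m` lies modulo one in the closed interval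
`[a m, a m + c]`. -/
theorem exists_beta_powers_in_intervals (c : ℝ) (hc0 : 0 < c) (hc1 : c < 1) (a : ℕ → ℝ) :
    ∃ β : ℝ, 1 < β ∧ ∀ m : ℕ, 1 ≤ m →
      ∃ q : ℤ, a m ≤ β ^ m - q ∧ β ^ m - q ≤ a m + c :=
  exists_beta_powers_in_intervals_general hc0 1 a
end

section
/- The set of measures associated with exponential sequences is dense in the space of probability measures on the torus: for every probability measure μ on the torus ℝ/ℤ and every neighborhood U of μ in the topology of weak convergence of probability measures, there exist a real number β > 1, a probability measure ν on the torus, and a strictly increasing sequence (N_j) of positive integers, such that the empirical measures (1/N_j)·∑_{n=1}^{N_j} δ_{β^n mod 1} converge weakly to ν as j → ∞, and ν ∈ U. -/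
open Filter Topology MeasureTheory BoundedContinuousFunction

/-!
Fix `ε > 0`. If `β ^ n` sweeps an interval of length `ε` while `β` runs through an interval of large
enough numbers, then `β ^ (n + 1)` sweeps one that covers the whole circle with `ε` to spare. Nested
intervals thus give, for every sequence `y` in the torus, a `β` whose powers stay `ε`-close to `y`
forever. Taking for `y` a typical sequence of independent points of law `μ`, the empirical measures
of `y` converge to `μ`, while those of the powers of `β` stay `ε`-close to them in the
Lévy–Prokhorov metric. By compactness they accumulate at some measure, which is then `ε`-close
to `μ`.
-/

open ProbabilityTheory Set
open scoped Function

section PowersShadowing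

variable {p : ℝ}

theorem dist_addCircle_coe_le (s t : ℝ) : dist (s : AddCircle p) t ≤ |s - t| := by
  rw [dist_eq_norm, ← AddCircle.coe_sub, ← Real.norm_eq_abs]
  exact QuotientAddGroup.norm_mk_le_norm

theorem exists_subinterval_coe_eq_of_add_period_le [Fact (0 < p)] {f : ℝ → ℝ} {l r ε : ℝ}
    (hf : ContinuousOn f (Icc l r)) (hlr : l ≤ r) (hε : 0 ≤ ε) (hlen : f l + p + ε ≤ f r)
    (y : AddCircle p) :
    ∃ l' r', l ≤ l' ∧ l' ≤ r' ∧ r' ≤ r ∧ (f l' : AddCircle p) = y ∧ f r' = f l' + ε := by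
  obtain ⟨t, ⟨hlt, htl⟩, rfl⟩ : y ∈ ((↑) : ℝ → AddCircle p) '' Icc (f l) (f l + p) := by
    rw [AddCircle.coe_image_Icc_eq]
    exact mem_univ y
  obtain ⟨l', ⟨hl, hle⟩, rfl⟩ := intermediate_value_Icc hlr hf ⟨hlt, by linarith⟩
  obtain ⟨r', ⟨hlr', hr⟩, hr'⟩ := intermediate_value_Icc hle
    (hf.mono (Icc_subset_Icc_left hl)) (show f l' + ε ∈ Icc (f l') (f r) from
      ⟨by linarith, by linarith⟩)
  exact ⟨l', r', hl, hlr', hr, rfl, hr'⟩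

theorem pow_succ_add_mul_le {l r ε : ℝ} {n : ℕ} (hl : 0 ≤ l) (hlr : l ≤ r)
    (h : r ^ n = l ^ n + ε) : l ^ (n + 1) + l * ε ≤ r ^ (n + 1) :=
  calc l ^ (n + 1) + l * ε = l * r ^ n := by rw [h]; ring
    _ ≤ r * r ^ n := mul_le_mul_of_nonneg_right hlr (pow_nonneg (hl.trans hlr) n)
    _ = r ^ (n + 1) := (pow_succ' r n).symm

theorem dist_coe_pow_le_of_mem_Icc {l r ε β : ℝ} {n : ℕ} (hl : 0 ≤ l) (h : r ^ n = l ^ n + ε)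
    (hβ : β ∈ Icc l r) : dist ((β ^ n : ℝ) : AddCircle p) ((l ^ n : ℝ) : AddCircle p) ≤ ε := by
  have hlβ : l ^ n ≤ β ^ n := pow_le_pow_left₀ hl hβ.1 n
  have hβr : β ^ n ≤ r ^ n := pow_le_pow_left₀ (hl.trans hβ.1) hβ.2 n
  refine (dist_addCircle_coe_le _ _).trans ?_
  rw [abs_of_nonneg (by linarith)]
  linarith

variable [Fact (0 < p)] {A ε : ℝ}

theorem exists_Icc_forall_dist_pow_le (hε : 0 ≤ ε) (hAε : p + ε ≤ A * ε)
    (y : ℕ → AddCircle p) (n : ℕ) :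
    ∃ l r, A ≤ l ∧ l ≤ r ∧ r ≤ A + p + ε ∧ r ^ (n + 1) = l ^ (n + 1) + ε ∧
      ∀ β ∈ Icc l r, ∀ i ≤ n, dist ((β ^ (i + 1) : ℝ) : AddCircle p) (y i) ≤ ε := by
  have hp : 0 < p := Fact.out
  have hA : 0 ≤ A := (pos_of_mul_pos_left (by linarith : 0 < A * ε) hε).le
  induction n with
  | zero =>
    obtain ⟨l, r, hl, hlr, hr, hy, hrl⟩ := exists_subinterval_coe_eq_of_add_period_le
      (f := fun x ↦ x ^ (0 + 1)) (l := A) (r := A + p + ε) (by fun_prop) (by linarith) hε (by simp)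
      (y 0)
    refine ⟨l, r, hl, hlr, hr, hrl, fun β hβ i hi ↦ ?_⟩
    obtain rfl : i = 0 := by lia
    exact hy ▸ dist_coe_pow_le_of_mem_Icc (hA.trans hl) hrl hβ
  | succ n ih =>
    obtain ⟨l, r, hl, hlr, hr, hrl, hdist⟩ := ih
    have hexpand : l ^ (n + 2) + p + ε ≤ r ^ (n + 2) := by
      have := pow_succ_add_mul_le (hA.trans hl) hlr hrl
      have := mul_le_mul_of_nonneg_right hl hε
      linarith
    obtain ⟨l', r', hl', hlr', hr', hy, hrl'⟩ := exists_subinterval_coe_eq_of_add_period_le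
      (f := fun x ↦ x ^ (n + 2)) (by fun_prop) hlr hε hexpand (y (n + 1))
    refine ⟨l', r', hl.trans hl', hlr', hr'.trans hr, hrl', fun β hβ i hi ↦ ?_⟩
    obtain hi | rfl := hi.lt_or_eq
    · exact hdist β (Icc_subset_Icc hl' hr' hβ) i (Nat.lt_succ_iff.1 hi)
    · exact hy ▸ dist_coe_pow_le_of_mem_Icc (hA.trans (hl.trans hl')) hrl' hβ

theorem exists_forall_dist_pow_le (hε : 0 ≤ ε) (hAε : p + ε ≤ A * ε)
    (y : ℕ → AddCircle p) :
    ∃ β, A ≤ β ∧ ∀ i, dist ((β ^ (i + 1) : ℝ) : AddCircle p) (y i) ≤ ε := by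
  let K (n : ℕ) : Set ℝ := Icc A (A + p + ε) ∩
    {β | ∀ i ≤ n, dist ((β ^ (i + 1) : ℝ) : AddCircle p) (y i) ≤ ε}
  have hKanti (n : ℕ) : K (n + 1) ⊆ K n := fun β hβ ↦ ⟨hβ.1, fun i hi ↦ hβ.2 i (hi.trans n.le_succ)⟩
  have hKne (n : ℕ) : (K n).Nonempty := by
    obtain ⟨l, r, hl, hlr, hr, -, hdist⟩ := exists_Icc_forall_dist_pow_le hε hAε y n
    exact ⟨l, ⟨hl, hlr.trans hr⟩, hdist l (left_mem_Icc.2 hlr)⟩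
  have hKclosed (n : ℕ) : IsClosed (K n) := by
    have hcont (i : ℕ) : Continuous fun β : ℝ ↦ ((β ^ (i + 1) : ℝ) : AddCircle p) :=
      (AddCircle.continuous_mk' p).comp (continuous_pow (i + 1))
    simp only [K, ofPred_forall]
    exact isClosed_Icc.inter <| isClosed_iInter fun i ↦ isClosed_iInter fun _ ↦
      isClosed_le ((hcont i).dist continuous_const) continuous_const
  obtain ⟨β, hβ⟩ := IsCompact.nonempty_iInter_of_sequence_nonempty_isCompact_isClosed K hKanti hKne
    (isCompact_Icc.of_isClosed_subset (hKclosed 0) inter_subset_left) hKclosed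
  rw [mem_iInter] at hβ
  exact ⟨β, (hβ 0).1.1, fun i ↦ (hβ i).2 i le_rfl⟩

end PowersShadowing

theorem exists_countable_isPiSystem_isOpen_nhds (E : Type*) [TopologicalSpace E]
    [SecondCountableTopology E] :
    ∃ S : Set (Set E), S.Countable ∧ IsPiSystem S ∧ (∀ s ∈ S, IsOpen s) ∧
      ∀ u, IsOpen u → ∀ x ∈ u, ∃ s ∈ S, s ∈ 𝓝 x ∧ s ⊆ u := by
  let B := TopologicalSpace.countableBasis E
  have hB : TopologicalSpace.IsTopologicalBasis B := TopologicalSpace.isBasis_countableBasis E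
  refine ⟨sInter '' {F | F.Finite ∧ F ⊆ B}, ?_, ?_, ?_, fun u hu x hx ↦ ?_⟩
  · exact (countable_ofPred_finite_subset (TopologicalSpace.countable_countableBasis E)).image _
  · rintro _ ⟨F, ⟨hF, hFB⟩, rfl⟩ _ ⟨G, ⟨hG, hGB⟩, rfl⟩ -
    exact ⟨F ∪ G, ⟨hF.union hG, union_subset hFB hGB⟩, sInter_union F G⟩
  · rintro _ ⟨F, ⟨hF, hFB⟩, rfl⟩
    exact hF.isOpen_sInter fun s hs ↦ hB.isOpen (hFB hs)
  · obtain ⟨s, hs, hxs, hsu⟩ := hB.exists_subset_of_mem_open hx hu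
    exact ⟨s, ⟨{s}, ⟨finite_singleton s, singleton_subset_iff.2 hs⟩, sInter_singleton s⟩,
      (hB.isOpen hs).mem_nhds hxs, hsu⟩

section EmpiricalMeasure

variable {E : Type*} [MeasurableSpace E]

instance isProbabilityMeasure_uniformOn_range_succ (n : ℕ) :
    IsProbabilityMeasure (uniformOn (Finset.range (n + 1) : Set ℕ)) :=
  isProbabilityMeasure_uniformOn (Finset.finite_toSet _) (by simp)

/-- The empirical measure `(1 / (n + 1)) ∑_{i ≤ n} δ_{x i}` of a sequence `x`, encoded as the image
under `x` of the uniform measure on `{0, …, n}`. It averages `n + 1` points, rather than `n`, so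
that it is a probability measure for every `n`. -/
noncomputable def empiricalMeasure (x : ℕ → E) (n : ℕ) : ProbabilityMeasure E :=
  ⟨(uniformOn (Finset.range (n + 1) : Set ℕ)).map x,
    Measure.isProbabilityMeasure_map Measurable.of_discrete.aemeasurable⟩

theorem coe_empiricalMeasure (x : ℕ → E) (n : ℕ) :
    (empiricalMeasure x n : Measure E) = (uniformOn (Finset.range (n + 1) : Set ℕ)).map x :=
  rfl

theorem integral_uniformOn_finset {ι : Type*} [MeasurableSpace ι] [MeasurableSingletonClass ι]
    (s : Finset ι) (f : ι → ℝ) : ∫ i, f i ∂uniformOn (s : Set ι) = (∑ i ∈ s, f i) / s.card := by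
  have hint : IntegrableOn f s Measure.count := by
    rw [← biUnion_of_singleton (s : Set ι)]
    exact integrableOn_finset_iUnion.2 fun i _ ↦ integrableOn_singleton (hx := by simp)
  rw [uniformOn, ProbabilityTheory.cond, integral_smul_measure, setIntegral_finset s hint]
  simp [Measure.count_apply_finset, div_eq_inv_mul]

theorem integral_empiricalMeasure (x : ℕ → E) (n : ℕ) {f : E → ℝ} (hf : StronglyMeasurable f) :
    ∫ z, f z ∂(empiricalMeasure x n : Measure E) =
      (∑ i ∈ Finset.range (n + 1), f (x i)) / (n + 1 : ℕ) := by
  rw [coe_empiricalMeasure, integral_map Measurable.of_discrete.aemeasurable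
    hf.aestronglyMeasurable, integral_uniformOn_finset, Finset.card_range]

section StrongLaw

variable {Ω : Type*} [MeasurableSpace Ω] {P : Measure Ω} {X : ℕ → Ω → E}

theorem ae_tendsto_integral_empiricalMeasure {μ : Measure E} (hlaw : ∀ i, HasLaw (X i) μ P)
    (hindep : Pairwise ((· ⟂ᵢ[P] ·) on X)) {f : E → ℝ} (hf : Measurable f) (hfi : Integrable f μ) :
    ∀ᵐ ω ∂P, Tendsto (fun n ↦ ∫ z, f z ∂(empiricalMeasure (X · ω) n : Measure E)) atTop
      (𝓝 (∫ z, f z ∂μ)) := by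
  have hident (i : ℕ) : IdentDistrib (f ∘ X i) (f ∘ X 0) P P :=
    ((hlaw i).identDistrib (hlaw 0)).comp hf
  have hint : Integrable (f ∘ X 0) P := by
    rw [← (hlaw 0).map_eq] at hfi
    exact hfi.comp_aemeasurable (hlaw 0).aemeasurable
  have hmean : ∫ ω, (f ∘ X 0) ω ∂P = ∫ z, f z ∂μ := (hlaw 0).integral_comp hfi.aestronglyMeasurable
  have hslln := strong_law_ae_real (fun i ↦ f ∘ X i) hint
    (fun i j hij ↦ (hindep hij).comp hf hf) hident
  filter_upwards [hslln] with ω hω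
  simp only [integral_empiricalMeasure _ _ hf.stronglyMeasurable]
  rw [← hmean]
  exact hω.comp (tendsto_add_atTop_nat 1)

theorem ae_tendsto_empiricalMeasure_apply {μ : ProbabilityMeasure E}
    (hlaw : ∀ i, HasLaw (X i) (μ : Measure E) P) (hindep : Pairwise ((· ⟂ᵢ[P] ·) on X))
    {s : Set E} (hs : MeasurableSet s) :
    ∀ᵐ ω ∂P, Tendsto (fun n ↦ empiricalMeasure (X · ω) n s) atTop (𝓝 (μ s)) := by
  filter_upwards [ae_tendsto_integral_empiricalMeasure hlaw hindep
    (measurable_one.indicator hs) ((integrable_const 1).indicator hs)] with ω hω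
  simp only [integral_indicator_one hs] at hω
  exact NNReal.tendsto_coe.1 hω

theorem ae_tendsto_empiricalMeasure [TopologicalSpace E] [SecondCountableTopology E]
    [OpensMeasurableSpace E] [HasOuterApproxClosed E] {μ : ProbabilityMeasure E}
    (hlaw : ∀ i, HasLaw (X i) (μ : Measure E) P) (hindep : Pairwise ((· ⟂ᵢ[P] ·) on X)) :
    ∀ᵐ ω ∂P, Tendsto (empiricalMeasure (X · ω)) atTop (𝓝 μ) := by
  obtain ⟨S, hScount, hSpi, hSopen, hSnhds⟩ := exists_countable_isPiSystem_isOpen_nhds E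
  have hconv : ∀ᵐ ω ∂P, ∀ s ∈ S,
      Tendsto (fun n ↦ empiricalMeasure (X · ω) n s) atTop (𝓝 (μ s)) :=
    (ae_ball_iff hScount).2 fun s hs ↦
      ae_tendsto_empiricalMeasure_apply hlaw hindep (hSopen s hs).measurableSet
  filter_upwards [hconv] with ω hω
  exact hSpi.tendsto_probabilityMeasure_of_tendsto_of_mem
    (fun s hs ↦ (hSopen s hs).measurableSet) hSnhds hω

end StrongLaw

theorem exists_tendsto_empiricalMeasure [TopologicalSpace E] [SecondCountableTopology E]
    [OpensMeasurableSpace E] [HasOuterApproxClosed E] (μ : ProbabilityMeasure E) :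
    ∃ y : ℕ → E, Tendsto (empiricalMeasure y) atTop (𝓝 μ) := by
  obtain ⟨Ω, _, P, X, -, hlaw, hindep, _⟩ := exists_iid ℕ (μ : Measure E)
  obtain ⟨ω, hω⟩ := (ae_tendsto_empiricalMeasure hlaw fun i j hij ↦ hindep.indepFun hij).exists
  exact ⟨(X · ω), hω⟩

end EmpiricalMeasure

section LevyProkhorov

variable {E : Type*} [MeasurableSpace E] [PseudoMetricSpace E] [OpensMeasurableSpace E]

theorem levyProkhorovDist_map_map_le {Ω : Type*} [MeasurableSpace Ω] {P : Measure Ω}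
    [IsProbabilityMeasure P] {X Y : Ω → E} (hX : AEMeasurable X P) (hY : AEMeasurable Y P) {ε : ℝ}
    (h : ∀ᵐ ω ∂P, dist (X ω) (Y ω) ≤ ε) : levyProkhorovDist (P.map X) (P.map Y) ≤ ε := by
  have := Measure.isProbabilityMeasure_map hX
  have := Measure.isProbabilityMeasure_map hY
  obtain ⟨ω, hω⟩ := h.exists
  refine levyProkhorovDist_le_of_forall_le _ _ (dist_nonneg.trans hω) fun δ B hδ hB ↦ ?_
  rw [Measure.map_apply_of_aemeasurable hX hB,
    Measure.map_apply_of_aemeasurable hY Metric.isOpen_thickening.measurableSet]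
  refine le_add_right (measure_mono_ae ?_)
  filter_upwards [h] with ω hω hωB
  exact Metric.mem_thickening_iff.2 ⟨X ω, hωB, (dist_comm _ _).trans_lt (hω.trans_lt hδ)⟩

theorem levyProkhorovDist_empiricalMeasure_le {x y : ℕ → E} {ε : ℝ}
    (h : ∀ i, dist (x i) (y i) ≤ ε) (n : ℕ) :
    levyProkhorovDist (empiricalMeasure x n : Measure E) (empiricalMeasure y n) ≤ ε :=
  levyProkhorovDist_map_map_le Measurable.of_discrete.aemeasurable
    Measurable.of_discrete.aemeasurable (ae_of_all _ h)

variable [TopologicalSpace.SeparableSpace E]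

theorem tendsto_levyProkhorovDist {ι : Type*} {l : Filter ι} {μs νs : ι → ProbabilityMeasure E}
    {μ ν : ProbabilityMeasure E} (hμ : Tendsto μs l (𝓝 μ)) (hν : Tendsto νs l (𝓝 ν)) :
    Tendsto (fun i ↦ levyProkhorovDist (μs i : Measure E) (νs i)) l
      (𝓝 (levyProkhorovDist (μ : Measure E) ν)) := by
  have hcont := LevyProkhorov.continuous_ofMeasure_probabilityMeasure (Ω := E)
  exact ((hcont.tendsto μ).comp hμ).dist ((hcont.tendsto ν).comp hν)

theorem exists_pos_forall_levyProkhorovDist_lt_mem {μ : ProbabilityMeasure E}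
    {U : Set (ProbabilityMeasure E)} (hU : U ∈ 𝓝 μ) :
    ∃ ε > 0, ∀ ν : ProbabilityMeasure E, levyProkhorovDist (ν : Measure E) μ < ε → ν ∈ U := by
  let e := LevyProkhorov.probabilityMeasureHomeomorph (Ω := E)
  have hbasis := (Metric.nhds_basis_ball (x := e μ)).comap e
  rw [← e.isInducing.nhds_eq_comap] at hbasis
  obtain ⟨ε, hε, hball⟩ := hbasis.mem_iff.1 hU
  exact ⟨ε, hε, fun ν hν ↦ hball hν⟩

end LevyProkhorov

theorem exists_tendsto_empiricalMeasure_comp {E : Type*} [MeasurableSpace E] [MetricSpace E]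
    [BorelSpace E] [CompactSpace E] {μ : ProbabilityMeasure E} {x y : ℕ → E} {ε : ℝ}
    (hy : Tendsto (empiricalMeasure y) atTop (𝓝 μ)) (hxy : ∀ i, dist (x i) (y i) ≤ ε) :
    ∃ (ν : ProbabilityMeasure E) (φ : ℕ → ℕ), StrictMono φ ∧
      Tendsto (empiricalMeasure x ∘ φ) atTop (𝓝 ν) ∧ levyProkhorovDist (ν : Measure E) μ ≤ ε := by
  obtain ⟨ν, φ, hφ, hν⟩ := CompactSpace.tendsto_subseq (empiricalMeasure x)
  refine ⟨ν, φ, hφ, hν, ?_⟩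
  exact le_of_tendsto' (tendsto_levyProkhorovDist hν (hy.comp hφ.tendsto_atTop)) fun j ↦
    levyProkhorovDist_empiricalMeasure_le hxy (φ j)

theorem integral_empiricalMeasure_succ {E : Type*} [MeasurableSpace E] (x : ℕ → E) (n : ℕ)
    {f : E → ℝ} (hf : StronglyMeasurable f) :
    ∫ z, f z ∂(empiricalMeasure (fun i ↦ x (i + 1)) n : Measure E) =
      (∑ i ∈ Finset.Icc 1 (n + 1), f (x i)) / (n + 1 : ℕ) := by
  rw [integral_empiricalMeasure _ n hf, Finset.range_eq_Ico,
    Finset.sum_Ico_add' (fun i ↦ f (x i)) 0 (n + 1) 1]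
  rfl

/-- The set of measures associated with the sequences `(β ^ n mod 1)` is dense in the space
of probability measures on the torus `ℝ/ℤ` (with the topology of weak convergence): for
every probability measure `μ` on the torus and every neighborhood `U` of `μ`, there are a
real `β > 1`, a probability measure `ν ∈ U` and a strictly increasing sequence `N` of
positive integers along which the empirical measures of `(β ^ n mod 1)` converge weakly
to `ν`. -/
theorem associated_measures_dense (μ : ProbabilityMeasure UnitAddCircle)
    (U : Set (ProbabilityMeasure UnitAddCircle)) (hU : U ∈ 𝓝 μ) :
    ∃ (β : ℝ) (ν : ProbabilityMeasure UnitAddCircle) (N : ℕ → ℕ),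
      1 < β ∧ StrictMono N ∧ 1 ≤ N 0 ∧
      (∀ f : UnitAddCircle →ᵇ ℝ,
        Tendsto
          (fun j : ℕ =>
            (∑ n ∈ Finset.Icc 1 (N j), f ((β ^ n : ℝ) : UnitAddCircle)) / (N j : ℝ))
          atTop (𝓝 (∫ x, f x ∂(ν : Measure UnitAddCircle)))) ∧
      ν ∈ U := by
  obtain ⟨ε, hε, hεU⟩ := exists_pos_forall_levyProkhorovDist_lt_mem hU
  obtain ⟨δ, hδ, hδε⟩ := exists_between hε
  obtain ⟨y, hy⟩ := exists_tendsto_empiricalMeasure μ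
  obtain ⟨β, hβ, hβy⟩ := exists_forall_dist_pow_le (A := 1 / δ + 1) hδ.le
    (by rw [add_mul, one_div_mul_cancel hδ.ne', one_mul]) y
  obtain ⟨ν, φ, hφ, hν, hνμ⟩ := exists_tendsto_empiricalMeasure_comp hy hβy
  rw [ProbabilityMeasure.tendsto_iff_forall_integral_tendsto] at hν
  refine ⟨β, ν, fun j ↦ φ j + 1, ?_, hφ.add_const 1, by simp, fun f ↦ ?_, hεU ν (hνμ.trans_lt hδε)⟩
  · have : 0 < 1 / δ := by positivity
    linarith
  · refine (hν f).congr fun j ↦ ?_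
    exact integral_empiricalMeasure_succ (fun n ↦ ((β ^ n : ℝ) : UnitAddCircle)) (φ j)
      f.continuous.stronglyMeasurable
end
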